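/- Fix ζ > 0 and s > 0. For each positive integer M, let γ_M be a real random variable with the Gamma(M, ζ) distribution, i.e. with probability density f_M(x) = x^{M-1} e^{-x/ζ} / (Γ(M) ζ^M) for x ≥ 0. Then lim_{M → ∞} E[(1 + γ_M)^{s-1}] / (1 + ζ M)^{s-1} = 1. -/

import Mathlib

open MeasureTheory ProbabilityTheory Filter

/-!
Both `E[(1 + γ)^p]` and `(1 + ζ a)^p` are asymptotic to `(ζ a)^p` as the shape `a` tends to
infinity, for every real exponent `p`. The moment `E[γ^q] = ζ^q Γ(a + q) / Γ(a)` is asymptotic to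
`(ζ a)^q`: log-convexity of `Γ` gives `Γ(a + q) ~ Γ(a) a^q` for `q ∈ [0, 1]` (Wendel's
inequalities), and the functional equation carries this to all real `q`. Replacing `γ` by `1 + γ`
is harmless because, for an integer `k ≥ |p|`, the difference `|(1 + x)^p - x^p|` is at most
`x^p ((1 + 1/x)^k - 1)`, a combination of powers of `x` with exponents smaller than `p`.
-/

open Real Asymptotics Set Topology

lemma isEquivalent_const_add_atTop (c : ℝ) : (fun x ↦ c + x) ~[atTop] fun x ↦ x :=
  IsEquivalent.refl.const_add_of_norm_tendsto_atTop tendsto_norm_atTop_atTop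

lemma isEquivalent_const_add_rpow_atTop (c p : ℝ) :
    (fun x ↦ (c + x) ^ p) ~[atTop] fun x ↦ x ^ p := by
  have habs : (fun x : ℝ ↦ x) =ᶠ[atTop] fun x ↦ |x| := by
    filter_upwards [eventually_ge_atTop 0] with x hx using (abs_of_nonneg hx).symm
  have hpow : (fun x ↦ (c + x) ^ p) ~[atTop] fun x ↦ |x| ^ p :=
    ((isEquivalent_const_add_atTop c).trans habs.isEquivalent).rpow fun x ↦ abs_nonneg x
  exact hpow.congr_right <| habs.symm.fun_comp (· ^ p)

lemma isLittleO_rpow_rpow_atTop {p q : ℝ} (hpq : p < q) :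
    (fun x : ℝ ↦ x ^ p) =o[atTop] fun x ↦ x ^ q := by
  rw [isLittleO_iff_tendsto' ((eventually_gt_atTop 0).mono fun x hx h ↦
    absurd h (rpow_pos_of_pos hx q).ne')]
  refine (tendsto_rpow_neg_atTop (sub_pos.2 hpq)).congr' ?_
  filter_upwards [eventually_gt_atTop 0] with x hx
  rw [neg_sub, rpow_sub hx]

lemma Gamma_add_le_Gamma_mul_rpow {x q : ℝ} (hx : 0 < x) (hq : q ∈ Icc 0 1) :
    Gamma (x + q) ≤ Gamma x * x ^ q := by
  obtain rfl | hq0 := hq.1.eq_or_lt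
  · simp
  obtain rfl | hq1 := hq.2.eq_or_lt
  · simp [Gamma_add_one hx.ne', mul_comm]
  have hΓ := Gamma_pos_of_pos hx
  calc Gamma (x + q) = Gamma ((1 - q) * x + q * (x + 1)) := by ring_nf
    _ ≤ Gamma x ^ (1 - q) * Gamma (x + 1) ^ q :=
      Gamma_mul_add_mul_le_rpow_Gamma_mul_rpow_Gamma hx (by positivity) (sub_pos.2 hq1) hq0
        (sub_add_cancel 1 q)
    _ = Gamma x * x ^ q := by
      rw [Gamma_add_one hx.ne', mul_rpow hx.le hΓ.le, mul_left_comm, ← rpow_add hΓ,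
        sub_add_cancel, rpow_one, mul_comm]

lemma Gamma_add_one_le_Gamma_add_mul_rpow {x q : ℝ} (hx : 0 < x) (hq : q ∈ Icc 0 1) :
    Gamma (x + 1) ≤ Gamma (x + q) * (x + q) ^ (1 - q) := by
  have h := Gamma_add_le_Gamma_mul_rpow (add_pos_of_pos_of_nonneg hx hq.1)
    (Icc.mem_iff_one_sub_mem.1 hq)
  rwa [add_assoc, add_sub_cancel] at h

lemma isEquivalent_Gamma_add_of_mem_Icc {q : ℝ} (hq : q ∈ Icc 0 1) :
    (fun x ↦ Gamma (x + q)) ~[atTop] fun x ↦ Gamma x * x ^ q := by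
  apply isEquivalent_of_tendsto_one
  have hlow : Tendsto (fun x : ℝ ↦ x ^ (1 - q) / (q + x) ^ (1 - q)) atTop (𝓝 1) :=
    (isEquivalent_iff_tendsto_one <| (eventually_gt_atTop (-q)).mono fun x hx ↦
      (rpow_pos_of_pos (by linarith) _).ne').1 (isEquivalent_const_add_rpow_atTop q (1 - q)).symm
  refine tendsto_of_tendsto_of_tendsto_of_le_of_le' hlow tendsto_const_nhds ?_ ?_
  · filter_upwards [eventually_gt_atTop 0] with x hx
    have hxq : 0 < q + x := by linarith [hq.1]
    rw [Pi.div_apply, div_le_div_iff₀ (by positivity) (by positivity), mul_left_comm,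
      ← rpow_add hx, sub_add_cancel, rpow_one, mul_comm (Gamma x), ← Gamma_add_one hx.ne',
      add_comm q]
    exact Gamma_add_one_le_Gamma_add_mul_rpow hx hq
  · filter_upwards [eventually_gt_atTop 0] with x hx
    exact div_le_one_of_le₀ (Gamma_add_le_Gamma_mul_rpow hx hq) (by positivity)

lemma isEquivalent_Gamma_add_add_one_iff {q : ℝ} :
    ((fun x ↦ Gamma (x + (q + 1))) ~[atTop] fun x ↦ Gamma x * x ^ (q + 1)) ↔
      (fun x ↦ Gamma (x + q)) ~[atTop] fun x ↦ Gamma x * x ^ q := by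
  have hadd := isEquivalent_const_add_atTop q
  have hleft : (fun x ↦ Gamma (x + (q + 1))) =ᶠ[atTop] (fun x ↦ Gamma (x + q)) * (q + ·) := by
    filter_upwards [eventually_gt_atTop (-q)] with x hx
    rw [← add_assoc, Gamma_add_one (by linarith), Pi.mul_apply, mul_comm, add_comm x q]
  have hright :
      (fun x ↦ Gamma x * x ^ (q + 1)) =ᶠ[atTop] (fun x ↦ Gamma x * x ^ q) * (fun x ↦ x) := by
    filter_upwards [eventually_ne_atTop 0] with x hx
    rw [rpow_add_one hx, Pi.mul_apply, mul_assoc]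
  constructor <;> intro h
  · refine (((hleft.symm.trans_isEquivalent h).trans_eventuallyEq hright).div hadd).congr_left ?_
      |>.congr_right ?_
    · filter_upwards [eventually_gt_atTop (-q)] with x hx
      exact mul_div_cancel_right₀ _ (by linarith)
    · filter_upwards [eventually_ne_atTop 0] with x hx using mul_div_cancel_right₀ _ hx
  · exact (hleft.trans_isEquivalent (h.mul hadd)).trans_eventuallyEq hright.symm

lemma isEquivalent_Gamma_add (q : ℝ) :
    (fun x ↦ Gamma (x + q)) ~[atTop] fun x ↦ Gamma x * x ^ q := by
  rw [← Int.fract_add_floor q]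
  induction ⌊q⌋ with
  | zero =>
    simpa using isEquivalent_Gamma_add_of_mem_Icc ⟨Int.fract_nonneg q, (Int.fract_lt_one q).le⟩
  | succ n ih => simpa [← add_assoc] using isEquivalent_Gamma_add_add_one_iff.2 ih
  | pred n ih =>
    apply isEquivalent_Gamma_add_add_one_iff.1
    simpa [add_assoc] using ih

lemma gammaMeasure_eq_withDensity_restrict_Ioi (a r : ℝ) :
    gammaMeasure a r = (volume.restrict (Ioi 0)).withDensity fun x ↦
      ENNReal.ofReal (r ^ a / Gamma a * x ^ (a - 1) * exp (-(r * x))) := by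
  rw [gammaMeasure, ← withDensity_indicator measurableSet_Ioi]
  apply withDensity_congr_ae
  filter_upwards [Measure.ae_ne volume 0] with x hx
  rcases hx.lt_or_gt with hneg | hpos
  · rw [gammaPDF_of_neg hneg, indicator_of_notMem (notMem_Ioi.2 hneg.le)]
  · rw [gammaPDF_of_nonneg hpos.le, indicator_of_mem (mem_Ioi.2 hpos)]

lemma ae_pos_gammaMeasure (a r : ℝ) : ∀ᵐ x ∂gammaMeasure a r, 0 < x := by
  rw [gammaMeasure_eq_withDensity_restrict_Ioi]
  exact (withDensity_absolutelyContinuous _ _).ae_le (ae_restrict_mem measurableSet_Ioi)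

lemma integrable_gammaMeasure_iff {E : Type*} [NormedAddCommGroup E] [NormedSpace ℝ E] {a r : ℝ}
    (ha : 0 < a) (hr : 0 < r) {f : ℝ → E} :
    Integrable f (gammaMeasure a r) ↔
      IntegrableOn (fun x ↦ (r ^ a / Gamma a * x ^ (a - 1) * exp (-(r * x))) • f x) (Ioi 0) := by
  rw [gammaMeasure_eq_withDensity_restrict_Ioi, integrable_withDensity_iff_integrable_smul'
    (by fun_prop) (.of_forall fun _ ↦ ENNReal.ofReal_lt_top)]
  refine integrableOn_congr_fun (fun x (hx : 0 < x) ↦ ?_) measurableSet_Ioi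
  rw [ENNReal.toReal_ofReal (by positivity)]

lemma integral_gammaMeasure {E : Type*} [NormedAddCommGroup E] [NormedSpace ℝ E] {a r : ℝ}
    (ha : 0 < a) (hr : 0 < r) (f : ℝ → E) :
    ∫ x, f x ∂gammaMeasure a r =
      ∫ x in Ioi 0, (r ^ a / Gamma a * x ^ (a - 1) * exp (-(r * x))) • f x := by
  rw [gammaMeasure_eq_withDensity_restrict_Ioi, integral_withDensity_eq_integral_toReal_smul
    (by fun_prop) (.of_forall fun _ ↦ ENNReal.ofReal_lt_top)]
  refine setIntegral_congr_fun measurableSet_Ioi fun x (hx : 0 < x) ↦ ?_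
  rw [ENNReal.toReal_ofReal (by positivity)]

lemma eqOn_gammaDensity_smul_rpow (a r q : ℝ) :
    EqOn (fun x ↦ (r ^ a / Gamma a * x ^ (a - 1) * exp (-(r * x))) • x ^ q)
      (fun x ↦ r ^ a / Gamma a * (x ^ (a + q - 1) * exp (-(r * x)))) (Ioi 0) := by
  intro x (hx : 0 < x)
  simp only [smul_eq_mul, add_sub_right_comm a q, rpow_add hx]
  ring

lemma integrable_rpow_gammaMeasure {a r q : ℝ} (ha : 0 < a) (hr : 0 < r) (haq : 0 < a + q) :
    Integrable (fun x ↦ x ^ q) (gammaMeasure a r) := by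
  rw [integrable_gammaMeasure_iff ha hr,
    integrableOn_congr_fun (eqOn_gammaDensity_smul_rpow a r q) measurableSet_Ioi]
  have h := integrableOn_rpow_mul_exp_neg_mul_rpow (p := 1) (s := a + q - 1) (by linarith)
    one_pos hr
  simp only [rpow_one, neg_mul] at h
  exact h.const_mul _

lemma integral_rpow_gammaMeasure {a r q : ℝ} (ha : 0 < a) (hr : 0 < r) (haq : 0 < a + q) :
    ∫ x, x ^ q ∂gammaMeasure a r = Gamma (a + q) / (Gamma a * r ^ q) := by
  rw [integral_gammaMeasure ha hr,
    setIntegral_congr_fun measurableSet_Ioi (eqOn_gammaDensity_smul_rpow a r q),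
    integral_const_mul, integral_rpow_mul_exp_neg_mul_Ioi haq hr, one_div, inv_rpow hr.le,
    rpow_add hr]
  have hra := (rpow_pos_of_pos hr a).ne'
  field_simp

lemma isEquivalent_integral_rpow_gammaMeasure {r : ℝ} (hr : 0 < r) (q : ℝ) :
    (fun a ↦ ∫ x, x ^ q ∂gammaMeasure a r) ~[atTop] fun a ↦ (a / r) ^ q := by
  have hdiv : (fun a ↦ Gamma (a + q) / (Gamma a * r ^ q)) ~[atTop]
      fun a ↦ Gamma a * a ^ q / (Gamma a * r ^ q) :=
    (isEquivalent_Gamma_add q).div .refl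
  refine (hdiv.congr_left ?_).congr_right ?_
  · filter_upwards [eventually_gt_atTop 0, eventually_gt_atTop (-q)] with a ha haq
    rw [integral_rpow_gammaMeasure ha hr (by linarith)]
  · filter_upwards [eventually_gt_atTop 0] with a ha
    rw [mul_div_mul_left _ _ (Gamma_pos_of_pos ha).ne', div_rpow ha.le hr.le]

lemma abs_one_add_rpow_sub_one_le {t p : ℝ} {k : ℕ} (ht : 0 ≤ t) (hp : |p| ≤ k) :
    |(1 + t) ^ p - 1| ≤ (1 + t) ^ k - 1 := by
  obtain ⟨hkp, hpk⟩ := abs_le.1 hp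
  have hle : 1 ≤ 1 + t := by linarith
  have hup : (1 + t) ^ p ≤ (1 + t) ^ k := by
    simpa only [rpow_natCast] using rpow_le_rpow_of_exponent_le hle hpk
  have hlow : ((1 + t) ^ k)⁻¹ ≤ (1 + t) ^ p := by
    simpa only [rpow_neg (zero_le_one.trans hle), rpow_natCast]
      using rpow_le_rpow_of_exponent_le hle hkp
  have hamgm : 2 ≤ (1 + t) ^ k + ((1 + t) ^ k)⁻¹ := by
    have hpos : 0 < (1 + t) ^ k := by positivity
    rw [← sub_le_iff_le_add', inv_eq_one_div, le_div_iff₀ hpos]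
    nlinarith [sq_nonneg ((1 + t) ^ k - 1)]
  rw [abs_le]
  constructor <;> linarith

lemma abs_add_rpow_sub_rpow_le {c x p : ℝ} {k : ℕ} (hc : 0 ≤ c) (hx : 0 < x) (hp : |p| ≤ k) :
    |(c + x) ^ p - x ^ p| ≤
      ∑ j ∈ Finset.range k, c ^ (j + 1) * k.choose (j + 1) * x ^ (p - (j + 1 : ℕ)) := by
  have hfactor : (c + x) ^ p - x ^ p = x ^ p * ((1 + c / x) ^ p - 1) := by
    rw [mul_sub_one, ← mul_rpow hx.le (by positivity), mul_one_add, mul_div_cancel₀ _ hx.ne',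
      add_comm]
  have hbinom : (1 + c / x) ^ k - 1 =
      ∑ j ∈ Finset.range k, (c / x) ^ (j + 1) * k.choose (j + 1) := by
    rw [add_comm, add_pow, Finset.sum_range_succ']
    simp
  calc |(c + x) ^ p - x ^ p| = x ^ p * |(1 + c / x) ^ p - 1| := by
        rw [hfactor, abs_mul, abs_of_pos (rpow_pos_of_pos hx p)]
    _ ≤ x ^ p * ((1 + c / x) ^ k - 1) := by
        gcongr
        exact abs_one_add_rpow_sub_one_le (by positivity) hp
    _ = _ := by
        rw [hbinom, Finset.mul_sum]
        refine Finset.sum_congr rfl fun j _ ↦ ?_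
        rw [rpow_sub_natCast hx.ne', div_pow]
        ring

lemma isLittleO_integral_rpow_gammaMeasure {r p q : ℝ} (hr : 0 < r) (hqp : q < p) :
    (fun a ↦ ∫ x, x ^ q ∂gammaMeasure a r) =o[atTop] fun a ↦ (a / r) ^ p :=
  (isEquivalent_integral_rpow_gammaMeasure hr q).trans_isLittleO <|
    (isLittleO_rpow_rpow_atTop hqp).comp_tendsto <| tendsto_id.atTop_div_const hr

lemma isLittleO_integral_add_rpow_sub_rpow_gammaMeasure {r c : ℝ} (hr : 0 < r) (hc : 0 ≤ c)
    (p : ℝ) :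
    (fun a ↦ ∫ x, ((c + x) ^ p - x ^ p) ∂gammaMeasure a r) =o[atTop] fun a ↦ (a / r) ^ p := by
  obtain ⟨k, hk⟩ := exists_nat_ge |p|
  have hmajorant : (fun a ↦ ∑ j ∈ Finset.range k,
      c ^ (j + 1) * k.choose (j + 1) * ∫ x, x ^ (p - (j + 1 : ℕ)) ∂gammaMeasure a r)
      =o[atTop] fun a ↦ (a / r) ^ p :=
    IsLittleO.fun_sum fun j _ ↦
      (isLittleO_integral_rpow_gammaMeasure hr (sub_lt_self p (by positivity))).const_mul_left _
  refine IsBigO.trans_isLittleO (.of_bound' ?_) hmajorant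
  filter_upwards [eventually_gt_atTop 0, eventually_gt_atTop (k - p)] with a ha hap
  have hint : ∀ j ∈ Finset.range k, Integrable
      (fun x ↦ c ^ (j + 1) * k.choose (j + 1) * x ^ (p - (j + 1 : ℕ))) (gammaMeasure a r) := by
    intro j hj
    have hjk : ((j + 1 : ℕ) : ℝ) ≤ k := by exact_mod_cast Finset.mem_range.1 hj
    exact (integrable_rpow_gammaMeasure ha hr (by linarith)).const_mul _
  refine (norm_integral_le_of_norm_le (integrable_finsetSum _ hint) ?_).trans ?_
  · filter_upwards [ae_pos_gammaMeasure a r] with x hx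
    exact abs_add_rpow_sub_rpow_le hc hx hk
  · simp only [integral_finsetSum _ hint, integral_const_mul]
    exact le_abs_self _

lemma add_rpow_le_two_rpow_abs_mul {c x : ℝ} (hc : 0 ≤ c) (hx : 0 < x) (p : ℝ) :
    (c + x) ^ p ≤ 2 ^ |p| * (c ^ p + x ^ p) := by
  have hcp : 0 ≤ c ^ p := rpow_nonneg hc p
  have hxp : 0 ≤ x ^ p := rpow_nonneg hx.le p
  rcases le_total 0 p with hp | hp
  · calc (c + x) ^ p ≤ (2 * max c x) ^ p := by
          rw [two_mul]
          gcongr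
          exacts [le_max_left c x, le_max_right c x]
      _ = 2 ^ |p| * max c x ^ p := by
          rw [mul_rpow zero_le_two (hc.trans (le_max_left c x)), abs_of_nonneg hp]
      _ ≤ 2 ^ |p| * (c ^ p + x ^ p) := by
          gcongr
          rcases max_choice c x with hmax | hmax <;> rw [hmax] <;> linarith
  · calc (c + x) ^ p ≤ x ^ p := rpow_le_rpow_of_nonpos hx (le_add_of_nonneg_left hc) hp
      _ ≤ c ^ p + x ^ p := le_add_of_nonneg_left hcp
      _ ≤ 2 ^ |p| * (c ^ p + x ^ p) :=
          le_mul_of_one_le_left (by positivity) (one_le_rpow one_le_two (abs_nonneg p))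

lemma integrable_add_rpow_gammaMeasure {a r c p : ℝ} (ha : 0 < a) (hr : 0 < r) (hc : 0 ≤ c)
    (hap : 0 < a + p) : Integrable (fun x ↦ (c + x) ^ p) (gammaMeasure a r) := by
  have := isProbabilityMeasure_gammaMeasure ha hr
  have hint := integrable_rpow_gammaMeasure ha hr hap
  have hmeas : AEStronglyMeasurable (fun x ↦ (c + x) ^ p) (gammaMeasure a r) :=
    ((measurable_const_add c).pow_const p).aestronglyMeasurable
  refine (((integrable_const (c ^ p)).add hint).const_mul (2 ^ |p|)).mono' hmeas ?_
  filter_upwards [ae_pos_gammaMeasure a r] with x hx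
  rw [norm_of_nonneg (by positivity)]
  exact add_rpow_le_two_rpow_abs_mul hc hx p

lemma isEquivalent_integral_add_rpow_gammaMeasure {r c : ℝ} (hr : 0 < r) (hc : 0 ≤ c) (p : ℝ) :
    (fun a ↦ ∫ x, (c + x) ^ p ∂gammaMeasure a r) ~[atTop] fun a ↦ (a / r) ^ p := by
  refine ((isLittleO_integral_add_rpow_sub_rpow_gammaMeasure hr hc p).add_isEquivalent
    (isEquivalent_integral_rpow_gammaMeasure hr p)).congr_left ?_
  filter_upwards [eventually_gt_atTop 0, eventually_gt_atTop (-p)] with a ha hap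
  have hint := integrable_rpow_gammaMeasure ha hr (by linarith : 0 < a + p)
  rw [Pi.add_apply, integral_sub (integrable_add_rpow_gammaMeasure ha hr hc (by linarith)) hint,
    sub_add_cancel]

theorem tendsto_mellin_div_hardening_general {ζ : ℝ} (hζ : 0 < ζ) (s : ℝ)
    {ι : Type*} {l : Filter ι} {a : ι → ℝ} (ha : Tendsto a l atTop)
    {Ω : ι → Type*} [∀ i, MeasurableSpace (Ω i)] {P : ∀ i, Measure (Ω i)} {γ : ∀ i, Ω i → ℝ}
    (hγ : ∀ᶠ i in l, (P i).map (γ i) = gammaMeasure (a i) ζ⁻¹) :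
    Tendsto (fun i ↦ (∫ ω, (1 + γ i ω) ^ (s - 1) ∂P i) / (1 + ζ * a i) ^ (s - 1)) l (𝓝 1) := by
  have hmean : Tendsto (fun i ↦ ζ * a i) l atTop := ha.const_mul_atTop hζ
  have hlaw : ∀ᶠ i in l, ∫ x, (1 + x) ^ (s - 1) ∂gammaMeasure (a i) ζ⁻¹ =
      ∫ ω, (1 + γ i ω) ^ (s - 1) ∂P i := by
    filter_upwards [hγ, ha.eventually_gt_atTop 0] with i hi hai
    have := isProbabilityMeasure_gammaMeasure hai (inv_pos.2 hζ)
    have haemeas : AEMeasurable (γ i) (P i) :=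
      aemeasurable_of_map_neZero (by rw [hi]; infer_instance)
    have hmeas : Measurable fun x : ℝ ↦ (1 + x) ^ (s - 1) := by fun_prop
    rw [← hi, integral_map haemeas hmeas.aestronglyMeasurable]
  have hnum : (fun i ↦ ∫ ω, (1 + γ i ω) ^ (s - 1) ∂P i) ~[l] fun i ↦ (ζ * a i) ^ (s - 1) := by
    have h := (isEquivalent_integral_add_rpow_gammaMeasure (inv_pos.2 hζ) zero_le_one
      (s - 1)).comp_tendsto ha
    simp only [Function.comp_def, div_inv_eq_mul, mul_comm _ ζ] at h
    exact h.congr_left hlaw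
  have hden : (fun i ↦ (1 + ζ * a i) ^ (s - 1)) ~[l] fun i ↦ (ζ * a i) ^ (s - 1) :=
    (isEquivalent_const_add_rpow_atTop 1 (s - 1)).comp_tendsto hmean
  refine (isEquivalent_iff_tendsto_one ?_).1 (hnum.trans hden.symm)
  filter_upwards [hmean.eventually_gt_atTop 0] with i hi using by positivity

/-- Channel hardening: if `γ_M ~ Gamma(M, ζ)` for each `M ≥ 1`, then for fixed `ζ > 0` and
`s > 0`, `E[(1 + γ_M)^{s-1}] / (1 + ζ M)^{s-1} → 1` as `M → ∞`. -/
theorem tendsto_mellin_div_hardening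
    (ζ : ℝ) (hζ : 0 < ζ) (s : ℝ) (hs : 0 < s)
    {Ω : Type*} [MeasurableSpace Ω] (P : Measure Ω) [IsProbabilityMeasure P]
    (γ : ℕ → Ω → ℝ)
    (hγ : ∀ M : ℕ, 0 < M → Measure.map (γ M) P = gammaMeasure (M : ℝ) ζ⁻¹) :
    Tendsto (fun M : ℕ => (∫ ω, (1 + γ M ω) ^ (s - 1) ∂P) / (1 + ζ * M) ^ (s - 1))
      atTop (nhds 1) :=
  tendsto_mellin_div_hardening_general hζ s tendsto_natCast_atTop_atTop <|
    (eventually_gt_atTop 0).mono hγ
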